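/- Let s ≥ 2, ϑ ≥ 0, and take the second-order RKC2 coefficients: ω0 = 1 + ϑ/s², ω1 = T_s′(ω0)/T_s″(ω0), b_j = T_j″(ω0)/T_j′(ω0)² for 2 ≤ j ≤ s, b_0 = b_1 = b_2, a_j = 1 − b_j T_j(ω0), with μ_j, ν_j, κ_j, γ_j the RKC coefficients, and set C_s = Σ_{j=1}^{s} (b_s/b_j) U_{s−j}(ω0) μ_j. Let f : ℝⁿ → ℝⁿ be twice continuously differentiable with ‖f″(x)‖ ≤ C_{f″} for all x. Let yⁿ, ŷⁿ ∈ ℝⁿ and Δt > 0, and assume the Jacobian matrix J of f at yⁿ is symmetric with all eigenvalues in [−ρ, 0], where Δt·ρ ≤ 2ω0/ω1. Define the exact RKC step d_j and y^{n+1} and the mixed-precision step d̂_j and ŷ^{n+1} as follows: d_0 = 0, d_1 = μ_1 Δt f(yⁿ), d_j = ν_j d_{j−1} + κ_j d_{j−2} + μ_j Δt f(yⁿ + d_{j−1}) + γ_j Δt f(yⁿ), y^{n+1} = yⁿ + d_s; d̂_0 = 0, d̂_1 = μ_1 Δt f(ŷⁿ), d̂_j = ν_j d̂_{j−1} + κ_j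 d̂_{j−2} + μ_j Δt (f(ŷⁿ) + Δ̂f_{j−1}) + γ_j Δt f(ŷⁿ), ŷ^{n+1} = ŷⁿ + d̂_s. Assume for all 1 ≤ j ≤ s−1: ‖Δ̂f_j − (f(ŷⁿ + d̂_j) − f(ŷⁿ))‖₂ ≤ min(Ĉ Δt², C_Δ ‖ŷⁿ‖₂), ‖d̂_j‖₂ ≤ C_d · min(Δt ‖f(ŷⁿ)‖₂, ‖ŷⁿ‖₂) and ‖d_j‖₂ ≤ C_d · min(Δt ‖f(yⁿ)‖₂, ‖yⁿ‖₂), for constants Ĉ, C_Δ, C_d ≥ 0. Then ‖ŷ^{n+1} − y^{n+1}‖₂ ≤ ‖ŷⁿ − yⁿ‖₂ + C_{f″}(1 + 2C_s) ‖ŷⁿ − yⁿ‖₂² Δt + C_s min(Ĉ Δt², C_Δ ‖ŷⁿ‖₂) Δt + C_s C_{f″} C_d² ( min(Δt ‖f(ŷⁿ)‖₂, ‖ŷⁿ‖₂)² + min(Δt ‖f(yⁿ)‖₂, ‖yⁿ‖₂)² ) Δt. -/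

import Mathlib

noncomputable section

/-- Chebyshev polynomial of the first kind, evaluated in an arbitrary ring. -/
def chebT (R : Type*) [Ring R] : ℕ → R → R
  | 0, _ => 1
  | 1, x => x
  | n + 2, x => 2 * x * chebT R (n + 1) x - chebT R n x

/-- Chebyshev polynomial of the second kind, evaluated in an arbitrary ring. -/
def chebU (R : Type*) [Ring R] : ℕ → R → R
  | 0, _ => 1
  | 1, x => 2 * x
  | n + 2, x => 2 * x * chebU R (n + 1) x - chebU R n x

/-- Spectral norm of a real matrix: operator norm induced by the Euclidean norms. -/
def specNorm {m n : ℕ} (A : Matrix (Fin m) (Fin n) ℝ) : ℝ :=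
  ‖(Matrix.toEuclideanLin A).toContinuousLinearMap‖


open Polynomial in
theorem chebT_eq_eval (k : ℕ) (x : ℝ) : chebT ℝ k x = (Chebyshev.T ℝ k).eval x := by
  induction k using Nat.twoStepInduction with
  | zero => simp [chebT]
  | one => simp [chebT]
  | more k ih₀ ih₁ =>
    push_cast at ih₁ ⊢
    simp [chebT, ih₀, ih₁, Chebyshev.T_add_two]

open Polynomial in
theorem chebU_eq_eval (k : ℕ) (x : ℝ) : chebU ℝ k x = (Chebyshev.U ℝ k).eval x := by
  induction k using Nat.twoStepInduction with
  | zero => simp [chebU]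
  | one => simp [chebU]
  | more k ih₀ ih₁ =>
    push_cast at ih₁ ⊢
    simp [chebU, ih₀, ih₁, Chebyshev.U_add_two]

open Polynomial in
theorem deriv_chebT (k : ℕ) :
    deriv (fun x => chebT ℝ k x) = fun x => (derivative (Chebyshev.T ℝ k)).eval x := by
  funext x
  simp [chebT_eq_eval]

open Polynomial in
theorem deriv_deriv_chebT (k : ℕ) :
    deriv (deriv (fun x => chebT ℝ k x)) =
      fun x => (derivative (derivative (Chebyshev.T ℝ k))).eval x := by
  funext x
  simp [deriv_chebT]

open Polynomial in
theorem add_one_le_eval_U {x : ℝ} (hx : 1 ≤ x) (k : ℕ) :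
    (k : ℝ) + 1 ≤ (Chebyshev.U ℝ k).eval x := by
  induction k using Nat.twoStepInduction with
  | zero => simp
  | one => simp; linarith
  | more k ih₀ _ =>
    have hT := Chebyshev.one_le_eval_T_real ((k : ℤ) + 2) hx
    push_cast
    simp only [Chebyshev.U_eq_two_mul_T_add_U, eval_add, eval_mul, eval_ofNat]
    linarith

open Polynomial in
theorem sq_le_eval_derivative_T {x : ℝ} (hx : 1 ≤ x) (k : ℕ) :
    (k : ℝ) ^ 2 ≤ (derivative (Chebyshev.T ℝ k)).eval x := by
  rcases k with _ | k
  · simp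
  · have hU := add_one_le_eval_U hx k
    rw [Chebyshev.T_derivative_eq_U]
    simp
    nlinarith [(Nat.cast_nonneg k : (0 : ℝ) ≤ k)]

open Polynomial in
theorem eval_derivative_U_pos {x : ℝ} (hx : 1 ≤ x) (k : ℕ) :
    0 < (derivative (Chebyshev.U ℝ (k + 1))).eval x := by
  induction k using Nat.twoStepInduction with
  | zero => simp [derivative_mul]
  | one =>
    norm_num [Chebyshev.U_two, derivative_mul]
    linarith
  | more k ih₀ _ =>
    have hT := sq_le_eval_derivative_T hx (k + 3)
    have e : (((k + 2 : ℕ) : ℤ) + 1) = ((k : ℤ) + 1) + 2 := by push_cast; ring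
    have e' : ((k + 3 : ℕ) : ℤ) = ((k : ℤ) + 1) + 2 := by push_cast; ring
    rw [e, Chebyshev.U_eq_two_mul_T_add_U]
    rw [e'] at hT
    have : (0 : ℝ) ≤ ((k + 3 : ℕ) : ℝ) ^ 2 := by positivity
    simp only [derivative_add, derivative_mul, derivative_ofNat, zero_mul, zero_add, eval_add,
      eval_mul, eval_ofNat]
    linarith

open Polynomial in
theorem eval_derivative_derivative_T_pos {x : ℝ} (hx : 1 ≤ x) {k : ℕ} (hk : 2 ≤ k) :
    0 < (derivative (derivative (Chebyshev.T ℝ k))).eval x := by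
  obtain ⟨k, rfl⟩ := Nat.exists_eq_add_of_le' hk
  have hU := eval_derivative_U_pos hx k
  have e : ((k + 2 : ℕ) : ℤ) - 1 = (k : ℤ) + 1 := by push_cast; ring
  rw [Chebyshev.T_derivative_eq_U, e]
  simp [derivative_mul]
  positivity

open Polynomial in
theorem sq_sub_one_mul_sq_eval_derivative_T {x : ℝ} (hx : 1 ≤ x) (k : ℕ) :
    (x ^ 2 - 1) * (derivative (Chebyshev.T ℝ k)).eval x ^ 2 =
      (k : ℝ) ^ 2 * ((Chebyshev.T ℝ k).eval x ^ 2 - 1) := by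
  obtain ⟨θ, rfl⟩ : ∃ θ, Real.cosh θ = x := ⟨Real.arcosh x, Real.cosh_arcosh hx⟩
  have hU := Chebyshev.U_real_cosh θ ((k : ℤ) - 1)
  have h1 := Real.cosh_sq θ
  have h2 := Real.cosh_sq (k * θ)
  rw [Chebyshev.T_derivative_eq_U]
  push_cast at hU
  rw [sub_add_cancel] at hU
  simp only [eval_mul, eval_natCast, Chebyshev.T_real_cosh, Int.cast_natCast]
  rw [h1, h2]
  linear_combination (k : ℝ) ^ 2 *
    ((Chebyshev.U ℝ ((k : ℤ) - 1)).eval (Real.cosh θ) * Real.sinh θ + Real.sinh (k * θ)) * hU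

open Polynomial in
theorem eval_T_mul_eval_derivative_derivative_T_le {x : ℝ} (hx : 1 ≤ x) (k : ℕ) :
    (Chebyshev.T ℝ k).eval x * (derivative (derivative (Chebyshev.T ℝ k))).eval x ≤
      (derivative (Chebyshev.T ℝ k)).eval x ^ 2 := by
  have hT := Chebyshev.one_le_eval_T_real k hx
  have hT' := sq_le_eval_derivative_T hx k
  rcases hx.eq_or_lt with rfl | hx'
  · have h0 := Chebyshev.iterate_derivative_T_eval_one_recurrence (R := ℝ) k 0
    have h1 := Chebyshev.iterate_derivative_T_eval_one_recurrence (R := ℝ) k 1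
    simp at h0 h1 ⊢
    rw [h0] at h1 ⊢
    nlinarith [sq_nonneg (k : ℝ), sq_nonneg ((k : ℝ) ^ 2)]
  · have hode := congrArg (eval x)
      (Chebyshev.one_sub_X_sq_mul_derivative_derivative_T_eq_poly_in_T (R := ℝ) k)
    have hpell := sq_sub_one_mul_sq_eval_derivative_T hx k
    simp at hode
    have hpos : 0 < x ^ 2 - 1 := by nlinarith
    refine le_of_mul_le_mul_left ?_ hpos
    rw [hpell]
    set t := (Chebyshev.T ℝ k).eval x
    set t' := (derivative (Chebyshev.T ℝ k)).eval x
    have h1 : (k : ℝ) ^ 2 ≤ x * t * t' := by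
      have : 1 ≤ x * t := by nlinarith
      nlinarith [sq_nonneg (k : ℝ)]
    linear_combination h1 - t * hode

open Polynomial in
theorem abs_eval_T_le {x y : ℝ} (hy : 1 ≤ y) (hxy : |x| ≤ y) (k : ℕ) :
    |(Chebyshev.T ℝ k).eval x| ≤ (Chebyshev.T ℝ k).eval y := by
  rcases le_total |x| 1 with hx | hx
  · exact (Chebyshev.abs_eval_T_real_le_one k hx).trans (Chebyshev.one_le_eval_T_real k hy)
  · have habs : |(Chebyshev.T ℝ k).eval x| = (Chebyshev.T ℝ k).eval |x| := by
      rw [← abs_of_nonneg (zero_le_one.trans (Chebyshev.one_le_eval_T_real k hx))]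
      rcases abs_choice x with h | h
      · rw [h]
      · rw [h, Chebyshev.T_eval_neg, abs_mul]
        rcases Int.units_eq_one_or (k : ℤ).negOnePow with h | h <;> simp [h]
    rw [habs]
    refine monotoneOn_of_deriv_nonneg (convex_Ici 1) (Polynomial.continuousOn _)
      (Polynomial.differentiableOn _) (fun z hz => ?_) hx hy hxy
    rw [interior_Ici] at hz
    rw [Polynomial.deriv]
    exact (sq_nonneg _).trans (sq_le_eval_derivative_T (le_of_lt hz) k)

theorem abs_chebT_le {x y : ℝ} (hy : 1 ≤ y) (hxy : |x| ≤ y) (k : ℕ) :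
    |chebT ℝ k x| ≤ chebT ℝ k y := by
  simpa only [chebT_eq_eval] using abs_eval_T_le hy hxy k

open Polynomial in
theorem abs_chebU_le {x y : ℝ} (hy : 1 ≤ y) (hxy : |x| ≤ y) (k : ℕ) :
    |chebU ℝ k x| ≤ chebU ℝ k y := by
  simp only [chebU_eq_eval]
  induction k using Nat.twoStepInduction with
  | zero => simp
  | one => simpa [abs_mul] using hxy
  | more k ih₀ _ =>
    have hT := abs_eval_T_le hy hxy (k + 2)
    push_cast at hT ⊢
    simp only [Chebyshev.U_eq_two_mul_T_add_U, eval_add, eval_mul, eval_ofNat]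
    refine (abs_add_le _ _).trans (add_le_add ?_ ih₀)
    rw [abs_mul, abs_two]
    linarith

theorem rkc_weight_pos {x : ℝ} (hx : 1 ≤ x) {k : ℕ} (hk : 2 ≤ k) :
    0 < deriv (deriv (fun x => chebT ℝ k x)) x / (deriv (fun x => chebT ℝ k x) x) ^ 2 := by
  have hT' := sq_le_eval_derivative_T hx k
  have hT'' := eval_derivative_derivative_T_pos hx hk
  have : (0 : ℝ) < (k : ℝ) ^ 2 := by positivity
  rw [deriv_deriv_chebT, deriv_chebT]
  exact div_pos hT'' (pow_pos (by linarith) 2)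

theorem rkc_weight_mul_chebT_le_one {x : ℝ} (hx : 1 ≤ x) (k : ℕ) :
    deriv (deriv (fun x => chebT ℝ k x)) x / (deriv (fun x => chebT ℝ k x) x) ^ 2
      * chebT ℝ k x ≤ 1 := by
  rw [deriv_deriv_chebT, deriv_chebT, chebT_eq_eval, div_mul_eq_mul_div, mul_comm]
  exact div_le_one_of_le₀ (eval_T_mul_eval_derivative_derivative_T_le hx k) (sq_nonneg _)

theorem rkc_scale_pos {x : ℝ} (hx : 1 ≤ x) {k : ℕ} (hk : 2 ≤ k) :
    0 < deriv (fun x => chebT ℝ k x) x / deriv (deriv (fun x => chebT ℝ k x)) x := by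
  have hT' := sq_le_eval_derivative_T hx k
  have hT'' := eval_derivative_derivative_T_pos hx hk
  have : (0 : ℝ) < (k : ℝ) ^ 2 := by positivity
  rw [deriv_deriv_chebT, deriv_chebT]
  exact div_pos (by linarith) hT''

theorem norm_taylor_remainder_le {E F : Type*} [NormedAddCommGroup E] [NormedSpace ℝ E]
    [NormedAddCommGroup F] [NormedSpace ℝ F] {f : E → F} (hf : ContDiff ℝ 2 f) {C : ℝ}
    (hC : ∀ x, ‖iteratedFDeriv ℝ 2 f x‖ ≤ C) {x : E} {f' : E →L[ℝ] F}
    (hf' : HasFDerivAt f f' x) (v : E) :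
    ‖f (x + v) - f x - f' v‖ ≤ C / 2 * ‖v‖ ^ 2 := by
  have hdiff : Differentiable ℝ f := hf.differentiable (by norm_num)
  have hdiff' : Differentiable ℝ (fderiv ℝ f) :=
    (hf.fderiv_right (m := 1) (by norm_num)).differentiable (by norm_num)
  have hbound (z : E) : ‖fderiv ℝ (fderiv ℝ f) z‖ ≤ C := by
    have h := hC z
    rwa [← norm_iteratedFDeriv_fderiv (n := 1), norm_iteratedFDeriv_one] at h
  have hlip (w : E) : ‖fderiv ℝ f (x + w) - f'‖ ≤ C * ‖w‖ := by
    have h := convex_univ.norm_image_sub_le_of_norm_fderiv_le (𝕜 := ℝ) (f := fderiv ℝ f)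
      (fun z _ => hdiff' z) (fun z _ => hbound z) (Set.mem_univ x) (Set.mem_univ (x + w))
    rwa [hf'.fderiv, add_sub_cancel_left] at h
  have hline (t : ℝ) : HasDerivAt (fun t : ℝ => x + t • v) v t := by
    simpa using ((hasDerivAt_id t).smul_const v).const_add x
  have hg (t : ℝ) : HasDerivAt (fun t : ℝ => f (x + t • v) - f x - t • f' v)
      (fderiv ℝ f (x + t • v) v - f' v) t := by
    have h1 := (hdiff (x + t • v)).hasFDerivAt.comp_hasDerivAt t (hline t)
    have h2 := (hasDerivAt_id t).smul_const (f' v)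
    rw [one_smul] at h2
    exact (h1.sub_const (f x)).sub h2
  have hB (t : ℝ) : HasDerivAt (fun t : ℝ => C / 2 * ‖v‖ ^ 2 * t ^ 2) (C * ‖v‖ ^ 2 * t) t := by
    refine ((hasDerivAt_pow 2 t).const_mul (C / 2 * ‖v‖ ^ 2)).congr_deriv ?_
    norm_num
    ring
  have h := image_norm_le_of_norm_deriv_right_le_deriv_boundary (a := 0) (b := 1)
    (fun t _ => (hg t).continuousAt.continuousWithinAt) (fun t _ => (hg t).hasDerivWithinAt)
    (by simp) hB (fun t ht => ?_) (Set.right_mem_Icc.2 zero_le_one)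
  · simpa using h
  · rw [← sub_apply]
    calc _ ≤ ‖fderiv ℝ f (x + t • v) - f'‖ * ‖v‖ := ContinuousLinearMap.le_opNorm _ _
      _ ≤ C * ‖t • v‖ * ‖v‖ := by gcongr; exact hlip _
      _ = C * ‖v‖ ^ 2 * t := by rw [norm_smul, Real.norm_of_nonneg ht.1]; ring

theorem norm_stage_defect_le {E F : Type*} [NormedAddCommGroup E] [NormedSpace ℝ E]
    [NormedAddCommGroup F] [NormedSpace ℝ F] {f : E → F} {A : E →L[ℝ] F} {C : ℝ} (hC : 0 ≤ C)
    {y : E} (hf : ∀ v, ‖f (y + v) - f y - A v‖ ≤ C / 2 * ‖v‖ ^ 2) {y' d d' : E} {δ : F}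
    {m p q : ℝ} (hδ : ‖δ - (f (y' + d') - f y')‖ ≤ m) (hp : ‖d'‖ ≤ p) (hq : ‖d‖ ≤ q) :
    ‖f y' + δ - f (y + d) - A (y' - y + (d' - d))‖ ≤
      C * ‖y' - y‖ ^ 2 + m + C * (p ^ 2 + q ^ 2) := by
  have hsplit : f y' + δ - f (y + d) - A (y' - y + (d' - d)) =
      (δ - (f (y' + d') - f y')) + (f (y + (y' - y + d')) - f y - A (y' - y + d'))
        - (f (y + d) - f y - A d) := by
    have : y + (y' - y + d') = y' + d' := by abel
    rw [this]
    simp only [map_add, map_sub]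
    abel
  have hsq : ‖y' - y + d'‖ ^ 2 ≤ 2 * (‖y' - y‖ ^ 2 + p ^ 2) := by
    have : ‖y' - y + d'‖ ^ 2 ≤ (‖y' - y‖ + p) ^ 2 := by
      gcongr
      exact norm_add_le_of_le le_rfl hp
    linarith [add_sq_le (a := ‖y' - y‖) (b := p)]
  rw [hsplit]
  calc _ ≤ m + C / 2 * ‖y' - y + d'‖ ^ 2 + C / 2 * ‖d‖ ^ 2 :=
        norm_sub_le_of_le (norm_add_le_of_le hδ (hf _)) (hf _)
    _ ≤ m + C / 2 * (2 * (‖y' - y‖ ^ 2 + p ^ 2)) + C / 2 * q ^ 2 := by gcongr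
    _ ≤ _ := by nlinarith [mul_nonneg hC (sq_nonneg q)]

section Diagonal

variable {E ι : Type*} [NormedAddCommGroup E] [InnerProductSpace ℝ E] [Fintype ι]

theorem norm_apply_le_of_orthonormalBasis_eigenvectors (u : OrthonormalBasis ι ℝ E)
    {A : E →L[ℝ] E} {a : ι → ℝ} (hA : ∀ i, A (u i) = a i • u i) {c : ℝ} (hc : 0 ≤ c)
    (ha : ∀ i, |a i| ≤ c) (v : E) : ‖A v‖ ≤ c * ‖v‖ := by
  have hrepr (i : ι) : u.repr (A v) i = a i * u.repr v i := by
    conv_lhs => rw [← u.sum_repr v]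
    classical
    simp [hA, u.repr_self, Finset.sum_apply, Pi.single_apply, mul_comm]
  rw [← u.repr.norm_map (A v), ← u.repr.norm_map v]
  refine le_of_sq_le_sq ?_ (by positivity)
  rw [mul_pow, EuclideanSpace.norm_sq_eq, EuclideanSpace.norm_sq_eq, Finset.mul_sum]
  refine Finset.sum_le_sum fun i _ => ?_
  rw [hrepr, norm_mul, mul_pow, Real.norm_eq_abs]
  have := ha i
  gcongr

end Diagonal

section Operators

variable {E : Type*} [NormedAddCommGroup E] [NormedSpace ℝ E]

theorem chebT_add_two_apply (X : E →L[ℝ] E) (k : ℕ) (v : E) :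
    chebT (E →L[ℝ] E) (k + 2) X v =
      (2 : ℝ) • X (chebT (E →L[ℝ] E) (k + 1) X v) - chebT (E →L[ℝ] E) k X v := by
  simp [chebT, two_mul, two_smul]

theorem chebU_add_two_apply (X : E →L[ℝ] E) (k : ℕ) (v : E) :
    chebU (E →L[ℝ] E) (k + 2) X v =
      (2 : ℝ) • X (chebU (E →L[ℝ] E) (k + 1) X v) - chebU (E →L[ℝ] E) k X v := by
  simp [chebU, two_mul, two_smul]

theorem chebT_apply_eigenvector {X : E →L[ℝ] E} {x : ℝ} {v : E} (h : X v = x • v) (k : ℕ) :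
    chebT (E →L[ℝ] E) k X v = chebT ℝ k x • v := by
  induction k using Nat.twoStepInduction with
  | zero => simp [chebT]
  | one => simpa [chebT] using h
  | more k ih₀ ih₁ =>
    rw [chebT_add_two_apply, ih₀, ih₁, map_smul, h, chebT]
    module

theorem chebU_apply_eigenvector {X : E →L[ℝ] E} {x : ℝ} {v : E} (h : X v = x • v) (k : ℕ) :
    chebU (E →L[ℝ] E) k X v = chebU ℝ k x • v := by
  induction k using Nat.twoStepInduction with
  | zero => simp [chebU]
  | one => simp [chebU, two_mul, h, add_smul]
  | more k ih₀ ih₁ =>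
    rw [chebU_add_two_apply, ih₀, ih₁, map_smul, h, chebU]
    module

theorem eq_sum_chebU_of_recurrence (X : E →L[ℝ] E) {s : ℕ} {M c : ℕ → E} (h0 : M 0 = 0)
    (h1 : M 1 = c 1)
    (hM : ∀ j, j + 2 ≤ s → M (j + 2) = (2 : ℝ) • X (M (j + 1)) - M j + c (j + 2))
    {k : ℕ} (hk : k ≤ s) :
    M k = ∑ j ∈ Finset.Icc 1 k, chebU (E →L[ℝ] E) (k - j) X (c j) := by
  induction k using Nat.twoStepInduction with
  | zero => simpa using h0
  | one => simpa [chebU] using h1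
  | more k ih₀ ih₁ =>
    have hstep : ∑ j ∈ Finset.Icc 1 k, chebU (E →L[ℝ] E) (k + 2 - j) X (c j) =
        ∑ j ∈ Finset.Icc 1 k, ((2 : ℝ) • X (chebU (E →L[ℝ] E) (k + 1 - j) X (c j)) -
          chebU (E →L[ℝ] E) (k - j) X (c j)) := by
      refine Finset.sum_congr rfl fun j hj => ?_
      obtain ⟨i, rfl⟩ := Nat.exists_eq_add_of_le (Finset.mem_Icc.1 hj).2
      have e2 : j + i + 2 - j = i + 2 := by omega
      have e1 : j + i + 1 - j = i + 1 := by omega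
      have e0 : j + i - j = i := by omega
      rw [e2, e1, e0, chebU_add_two_apply]
    have e : k + 2 - (k + 1) = 1 := by omega
    rw [hM k hk, ih₀ (by omega), ih₁ (by omega), Finset.sum_Icc_succ_top (by omega),
      Finset.sum_Icc_succ_top (by omega), Finset.sum_Icc_succ_top (by omega), hstep,
      Finset.sum_sub_distrib, ← Finset.smul_sum, ← map_sum]
    simp [e, chebU, two_mul, two_smul]
    abel

theorem rkc_stage_eq (A : E →L[ℝ] E) {s : ℕ} (hs : 1 ≤ s) {ω0 ω1 τ : ℝ} {b μ ν κ : ℕ → ℝ}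
    (hb : ∀ j ≤ s, b j ≠ 0) (hμ1 : μ 1 = b 1 * ω1)
    (hμ : ∀ j, j + 2 ≤ s → μ (j + 2) = 2 * ω1 * b (j + 2) / b (j + 1))
    (hν : ∀ j, j + 2 ≤ s → ν (j + 2) = 2 * ω0 * b (j + 2) / b (j + 1))
    (hκ : ∀ j, j + 2 ≤ s → κ (j + 2) = -(b (j + 2) / b j))
    {D h : ℕ → E} {e : E} (hD0 : D 0 = 0) (hD1 : D 1 = (μ 1 * τ) • (A e + h 1))
    (hD : ∀ j, j + 2 ≤ s → D (j + 2) = ν (j + 2) • D (j + 1) + κ (j + 2) • D j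
      + (μ (j + 2) * τ) •
        (A (D (j + 1)) + (b (j + 1) * chebT ℝ (j + 1) ω0) • A e + h (j + 2))) :
    D s = b s • (chebT (E →L[ℝ] E) s (ω0 • 1 + (ω1 * τ) • A) e - chebT ℝ s ω0 • e)
      + ∑ j ∈ Finset.Icc 1 s, (b s / b j * μ j * τ) •
          chebU (E →L[ℝ] E) (s - j) (ω0 • 1 + (ω1 * τ) • A) (h j) := by
  set X : E →L[ℝ] E := ω0 • 1 + (ω1 * τ) • A with hX
  have hXv (v : E) : X v = ω0 • v + (ω1 * τ) • A v := by simp [hX]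
  have hsol := eq_sum_chebU_of_recurrence X (s := s)
    (M := fun j => (b j)⁻¹ • D j - (chebT (E →L[ℝ] E) j X e - chebT ℝ j ω0 • e))
    (c := fun j => (μ j * τ / b j) • h j) (by simp [hD0, chebT]) ?_ ?_ le_rfl
  · have hbs := hb s le_rfl
    rw [sub_eq_iff_eq_add] at hsol
    rw [← smul_inv_smul₀ hbs (D s), hsol, smul_add, add_comm, Finset.smul_sum]
    congr 1
    refine Finset.sum_congr rfl fun j _ => ?_
    rw [map_smul, smul_smul]
    congr 1
    ring
  · have hb1 := hb 1 hs
    simp only [chebT, hD1, hμ1, hXv]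
    match_scalars <;> field_simp <;> simp
  · intro j hj
    have hb0 := hb j (by omega)
    have hb1 := hb (j + 1) (by omega)
    have hb2 := hb (j + 2) (by omega)
    rw [chebT_add_two_apply, hD j hj, hμ j hj, hν j hj, hκ j hj, chebT]
    simp only [map_sub, map_smul, hXv]
    match_scalars <;> field_simp

end Operators

set_option maxHeartbeats 400000 in
/-- error propagation bound for one step of the mixed-precision RKC2 scheme
(second-order-preserving perturbation accuracy `Ĉ Δt²`) versus the exact RKC2 scheme. -/
theorem mixed_precision_rkc2_error_propagation_second_order
    {n : ℕ} (s : ℕ) (hs : 2 ≤ s) (ϑ : ℝ) (hϑ : 0 ≤ ϑ)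
    (ω0 ω1 : ℝ) (b μ ν κ γ : ℕ → ℝ)
    (hω0 : ω0 = 1 + ϑ / (s : ℝ) ^ 2)
    (hω1 : ω1 = deriv (fun x => chebT ℝ s x) ω0 / deriv (deriv (fun x => chebT ℝ s x)) ω0)
    (hb : ∀ j, 2 ≤ j → j ≤ s →
      b j = deriv (deriv (fun x => chebT ℝ j x)) ω0 / (deriv (fun x => chebT ℝ j x) ω0) ^ 2)
    (hb0 : b 0 = b 2) (hb1 : b 1 = b 2)
    (hμ1 : μ 1 = b 1 * ω1)
    (hμ : ∀ j, 2 ≤ j → j ≤ s → μ j = 2 * ω1 * b j / b (j - 1))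
    (hν : ∀ j, 2 ≤ j → j ≤ s → ν j = 2 * ω0 * b j / b (j - 1))
    (hκ : ∀ j, 2 ≤ j → j ≤ s → κ j = -(b j / b (j - 2)))
    (hγ : ∀ j, 2 ≤ j → j ≤ s → γ j = -(μ j * (1 - b (j - 1) * chebT ℝ (j - 1) ω0)))
    (Cs : ℝ) (hCs : Cs = ∑ j ∈ Finset.Icc 1 s, b s / b j * chebU ℝ (s - j) ω0 * μ j)
    (f : EuclideanSpace ℝ (Fin n) → EuclideanSpace ℝ (Fin n))
    (hf : ContDiff ℝ 2 f)
    (Cf'' : ℝ) (hCf'' : ∀ x, ‖iteratedFDeriv ℝ 2 f x‖ ≤ Cf'')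
    (yn yhat : EuclideanSpace ℝ (Fin n)) (Δt : ℝ) (hΔt : 0 < Δt)
    (J : Matrix (Fin n) (Fin n) ℝ) (hJsymm : J.IsHermitian)
    (hJ : HasFDerivAt f ((Matrix.toEuclideanLin J).toContinuousLinearMap) yn)
    (ρ : ℝ) (hρ : 0 ≤ ρ) (heig : ∀ i, hJsymm.eigenvalues i ∈ Set.Icc (-ρ) 0)
    (hstab : Δt * ρ ≤ 2 * ω0 / ω1)
    -- exact RKC2 step
    (d : ℕ → EuclideanSpace ℝ (Fin n))
    (hd0 : d 0 = 0) (hd1 : d 1 = (μ 1 * Δt) • f yn)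
    (hd : ∀ j, 2 ≤ j → j ≤ s →
      d j = ν j • d (j - 1) + κ j • d (j - 2) + (μ j * Δt) • f (yn + d (j - 1))
        + (γ j * Δt) • f yn)
    (yn' : EuclideanSpace ℝ (Fin n)) (hyn' : yn' = yn + d s)
    -- mixed-precision RKC2 step
    (Δf : ℕ → EuclideanSpace ℝ (Fin n))
    (dh : ℕ → EuclideanSpace ℝ (Fin n))
    (hdh0 : dh 0 = 0) (hdh1 : dh 1 = (μ 1 * Δt) • f yhat)
    (hdh : ∀ j, 2 ≤ j → j ≤ s →
      dh j = ν j • dh (j - 1) + κ j • dh (j - 2) + (μ j * Δt) • (f yhat + Δf (j - 1))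
        + (γ j * Δt) • f yhat)
    (yhat' : EuclideanSpace ℝ (Fin n)) (hyhat' : yhat' = yhat + dh s)
    -- assumptions on the perturbations and internal stages
    (Chat CΔ Cd : ℝ) (hChat : 0 ≤ Chat) (hCΔ : 0 ≤ CΔ) (hCd : 0 ≤ Cd)
    (hΔf : ∀ j, 1 ≤ j → j ≤ s - 1 →
      ‖Δf j - (f (yhat + dh j) - f yhat)‖ ≤ min (Chat * Δt ^ 2) (CΔ * ‖yhat‖))
    (hdhb : ∀ j, 1 ≤ j → j ≤ s - 1 →
      ‖dh j‖ ≤ Cd * min (Δt * ‖f yhat‖) ‖yhat‖)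
    (hdb : ∀ j, 1 ≤ j → j ≤ s - 1 →
      ‖d j‖ ≤ Cd * min (Δt * ‖f yn‖) ‖yn‖) :
    ‖yhat' - yn'‖ ≤ ‖yhat - yn‖ + Cf'' * (1 + 2 * Cs) * ‖yhat - yn‖ ^ 2 * Δt
      + Cs * min (Chat * Δt ^ 2) (CΔ * ‖yhat‖) * Δt
      + Cs * Cf'' * Cd ^ 2 *
          ((min (Δt * ‖f yhat‖) ‖yhat‖) ^ 2 + (min (Δt * ‖f yn‖) ‖yn‖) ^ 2) * Δt := by
  set A : EuclideanSpace ℝ (Fin n) →L[ℝ] EuclideanSpace ℝ (Fin n) :=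
    (Matrix.toEuclideanLin J).toContinuousLinearMap with hA
  have hω0' : 1 ≤ ω0 := by
    rw [hω0]
    have : 0 ≤ ϑ / (s : ℝ) ^ 2 := by positivity
    linarith
  have hω1pos : 0 < ω1 := hω1 ▸ rkc_scale_pos hω0' hs
  have hbpos (j : ℕ) (hj : j ≤ s) : 0 < b j := by
    have h2 : 0 < b 2 := hb 2 le_rfl hs ▸ rkc_weight_pos hω0' le_rfl
    match j, hj with
    | 0, _ => rwa [hb0]
    | 1, _ => rwa [hb1]
    | j + 2, hj => exact hb (j + 2) (by omega) hj ▸ rkc_weight_pos hω0' (by omega)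
  have hbT (j : ℕ) (hj1 : 1 ≤ j) (hj : j ≤ s) : b j * chebT ℝ j ω0 ≤ 1 := by
    match j, hj1, hj with
    | 1, _, _ =>
      have h2 := rkc_weight_mul_chebT_le_one hω0' 2
      rw [← hb 2 le_rfl hs] at h2
      refine le_trans ?_ h2
      rw [hb1]
      have := (hbpos 2 hs).le
      gcongr
      simp only [chebT]
      nlinarith
    | j + 2, _, hj =>
      have h2 := rkc_weight_mul_chebT_le_one hω0' (j + 2)
      rwa [← hb (j + 2) (by omega) hj] at h2
  have hTnonneg (j : ℕ) : 0 ≤ chebT ℝ j ω0 :=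
    (abs_nonneg _).trans (abs_chebT_le hω0' (abs_of_pos (by linarith)).le j)
  have hUnonneg (j : ℕ) : 0 ≤ chebU ℝ j ω0 :=
    (abs_nonneg _).trans (abs_chebU_le hω0' (abs_of_pos (by linarith)).le j)
  have hμpos (j : ℕ) (hj1 : 1 ≤ j) (hj : j ≤ s) : 0 < μ j := by
    have hbj := hbpos j hj
    rcases hj1.eq_or_lt with rfl | hj2
    · rw [hμ1]; positivity
    · have := hbpos (j - 1) (by omega)
      rw [hμ j hj2 hj]; positivity
  -- the spectrum of the shifted and scaled Jacobian
  set X := ω0 • (1 : EuclideanSpace ℝ (Fin n) →L[ℝ] EuclideanSpace ℝ (Fin n)) + (ω1 * Δt) • A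
    with hX
  set u := hJsymm.eigenvectorBasis
  have hXu (i : Fin n) : X (u i) = (ω0 + ω1 * Δt * hJsymm.eigenvalues i) • u i := by
    have hAu : A (u i) = hJsymm.eigenvalues i • u i := by
      ext k
      simpa [hA, u, Matrix.toLpLin_apply] using congrFun (hJsymm.mulVec_eigenvectorBasis i) k
    simp only [hX, add_apply, smul_apply, one_apply_eq_self, hAu]
    module
  have hx (i : Fin n) : |ω0 + ω1 * Δt * hJsymm.eigenvalues i| ≤ ω0 := by
    obtain ⟨hl, hr⟩ := heig i
    rw [le_div_iff₀ hω1pos] at hstab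
    have hc : 0 < ω1 * Δt := by positivity
    rw [abs_le]
    constructor <;> nlinarith
  have hUX (k : ℕ) (v : EuclideanSpace ℝ (Fin n)) :
      ‖chebU _ k X v‖ ≤ chebU ℝ k ω0 * ‖v‖ :=
    norm_apply_le_of_orthonormalBasis_eigenvectors u
      (fun i => chebU_apply_eigenvector (hXu i) k) (hUnonneg k)
      (fun i => abs_chebU_le hω0' (hx i) k) v
  have hTX (v : EuclideanSpace ℝ (Fin n)) :
      ‖v + b s • (chebT _ s X v - chebT ℝ s ω0 • v)‖ ≤ ‖v‖ := by
    have h := norm_apply_le_of_orthonormalBasis_eigenvectors u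
      (A := 1 + b s • (chebT _ s X - chebT ℝ s ω0 • 1)) (c := 1)
      (a := fun i => 1 + b s * (chebT ℝ s (ω0 + ω1 * Δt * hJsymm.eigenvalues i)
        - chebT ℝ s ω0)) (fun i => ?_) zero_le_one (fun i => ?_) v
    · simpa using h
    · simp only [add_apply, smul_apply, sub_apply, one_apply_eq_self,
        chebT_apply_eigenvector (hXu i)]
      module
    · have h1 := abs_le.1 (abs_chebT_le hω0' (hx i) s)
      have h2 := hbT s (by omega) le_rfl
      have h3 := hbpos s le_rfl
      rw [abs_le]
      constructor <;> nlinarith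
  -- local errors
  set e := yhat - yn with he
  set m := min (Chat * Δt ^ 2) (CΔ * ‖yhat‖)
  set p := min (Δt * ‖f yhat‖) ‖yhat‖
  set q := min (Δt * ‖f yn‖) ‖yn‖
  have hm : 0 ≤ m := by positivity
  have hC : 0 ≤ Cf'' := (norm_nonneg _).trans (hCf'' yn)
  set r : EuclideanSpace ℝ (Fin n) := f yhat - f yn - A e with hr
  have htaylor := norm_taylor_remainder_le hf hCf'' hJ
  have hr_le : ‖r‖ ≤ Cf'' / 2 * ‖e‖ ^ 2 := by simpa [hr, he] using htaylor e
  set g : ℕ → EuclideanSpace ℝ (Fin n) := fun j =>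
    f yhat + Δf j - f (yn + d j) - A (e + (dh j - d j)) with hg
  set h : ℕ → EuclideanSpace ℝ (Fin n) := fun j =>
    if j = 1 then r else g (j - 1) - (1 - b (j - 1) * chebT ℝ (j - 1) ω0) • r with hh
  set B := 2 * Cf'' * ‖e‖ ^ 2 + m + Cf'' * Cd ^ 2 * (p ^ 2 + q ^ 2) with hB
  have hg_le (j : ℕ) (hj1 : 1 ≤ j) (hj : j ≤ s - 1) :
      ‖g j‖ ≤ Cf'' * ‖e‖ ^ 2 + m + Cf'' * Cd ^ 2 * (p ^ 2 + q ^ 2) := by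
    refine (norm_stage_defect_le hC htaylor (hΔf j hj1 hj) (hdhb j hj1 hj)
      (hdb j hj1 hj)).trans_eq ?_
    ring
  have hh_le (j : ℕ) (hj1 : 1 ≤ j) (hj : j ≤ s) : ‖h j‖ ≤ B := by
    have hCe : 0 ≤ Cf'' * ‖e‖ ^ 2 := by positivity
    have hpq : 0 ≤ Cf'' * Cd ^ 2 * (p ^ 2 + q ^ 2) := by positivity
    rcases hj1.eq_or_lt with rfl | hj2
    · simp only [hh, if_true]
      linarith
    · simp only [hh, if_neg hj2.ne']
      have h1 := hg_le (j - 1) (by omega) (by omega)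
      have h2 := hbT (j - 1) (by omega) (by omega)
      have h3 : 0 ≤ b (j - 1) * chebT ℝ (j - 1) ω0 :=
        mul_nonneg (hbpos _ (by omega)).le (hTnonneg _)
      have h4 : ‖(1 - b (j - 1) * chebT ℝ (j - 1) ω0) • r‖ ≤ ‖r‖ := by
        rw [norm_smul, Real.norm_of_nonneg (by linarith)]
        exact mul_le_of_le_one_left (norm_nonneg _) (by linarith)
      refine (norm_sub_le _ _).trans ?_
      linarith
  have hrep := rkc_stage_eq A (s := s) (τ := Δt) (e := e) (D := fun j => dh j - d j) (h := h)
    (by omega) (fun j hj => (hbpos j hj).ne') hμ1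
    (fun j hj => hμ (j + 2) (by omega) hj) (fun j hj => hν (j + 2) (by omega) hj)
    (fun j hj => hκ (j + 2) (by omega) hj) (by simp [hd0, hdh0]) ?_ ?_
  rotate_left
  · simp only [hdh1, hd1, hh, if_true, hr]
    module
  · intro j hj
    have h1 := hdh (j + 2) (by omega) hj
    have h2 := hd (j + 2) (by omega) hj
    have h3 := hγ (j + 2) (by omega) hj
    have e1 : j + 2 - 1 = j + 1 := by omega
    have e2 : j + 2 - 2 = j := by omega
    have e3 : j + 2 ≠ 1 := by omega
    rw [e1] at h3
    rw [e1, e2, h3] at h1 h2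
    simp only [h1, h2, hh, if_neg e3, e1, hg, hr, map_add, map_sub]
    module
  have hCs0 : 0 ≤ Cs := by
    rw [hCs]
    refine Finset.sum_nonneg fun j hj => ?_
    obtain ⟨hj1, hj⟩ := Finset.mem_Icc.1 hj
    have h1 := hbpos s le_rfl
    have h2 := hbpos j hj
    have h3 := hμpos j hj1 hj
    have h4 := hUnonneg (s - j)
    positivity
  have hsum : ‖∑ j ∈ Finset.Icc 1 s, (b s / b j * μ j * Δt) • chebU _ (s - j) X (h j)‖
      ≤ Cs * B * Δt := by
    rw [hCs, Finset.sum_mul, Finset.sum_mul]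
    refine norm_sum_le_of_le _ fun j hj => ?_
    obtain ⟨hj1, hj⟩ := Finset.mem_Icc.1 hj
    have h1 := hbpos s le_rfl
    have h2 := hbpos j hj
    have h3 := hμpos j hj1 hj
    rw [norm_smul, Real.norm_of_nonneg (by positivity)]
    calc _ ≤ b s / b j * μ j * Δt * (chebU ℝ (s - j) ω0 * B) := by
          gcongr
          exact (hUX _ _).trans (mul_le_mul_of_nonneg_left (hh_le j hj1 hj) (hUnonneg _))
      _ = _ := by ring
  have hfinal : yhat' - yn' = (e + b s • (chebT _ s X e - chebT ℝ s ω0 • e))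
      + ∑ j ∈ Finset.Icc 1 s, (b s / b j * μ j * Δt) • chebU _ (s - j) X (h j) := by
    rw [add_assoc, ← hrep, hyhat', hyn', he]
    abel
  have hslack : 0 ≤ Cf'' * ‖e‖ ^ 2 * Δt := by positivity
  rw [hfinal]
  refine (norm_add_le_of_le (hTX e) hsum).trans ?_
  rw [hB]
  linarith
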